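/- Consider the DAT-SGD sequences generated with a gossip matrix P that satisfies the ρ-contraction property for some ρ ∈ (0,1], with a non-decreasing weight sequence (α_t). Then for every t ≥ 2 the consensus distance of the iterates satisfies the explicit bound Ξ_t ≤ (2η² α_t²/ρ)·Σ_{τ=1}^{t−1} (1 − ρ/2)^{t−1−τ} Ψ_τ. -/

import Mathlib

/-!
Let `V` be the consensus distance. By the contraction property and Young's inequality with
parameter `ρ / 2`, one round satisfies
`V (w (t + 1)) ≤ (1 - ρ) * V (w t - (η * α t) • g t)
  ≤ (1 - ρ / 2) * V (w t) + 2 * (η * α t) ^ 2 / ρ * V (g t)`.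
Unrolling this recursion from `V (w 1) = 0` gives a discounted sum with weights `α τ ^ 2`, which
are at most `α t ^ 2`. A gossip matrix whose columns sum to one preserves the average, so
contraction towards the average of the input is contraction of `V`.
-/

theorem le_pow_mul_add_sum_of_le_mul_add {R : Type*} [CommSemiring R] [PartialOrder R]
    [IsOrderedRing R] {u b : ℕ → R} {q : R} {m n : ℕ} (hq : 0 ≤ q)
    (hu : ∀ k ≥ m, u (k + 1) ≤ q * u k + b k) (hmn : m ≤ n) :
    u n ≤ q ^ (n - m) * u m + ∑ k ∈ Finset.Ico m n, q ^ (n - 1 - k) * b k := by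
  have hgronwall := discrete_gronwall_prod_general hu (fun _ _ => hq) hmn
  simpa only [Finset.prod_const, Nat.card_Ico, mul_comm, Nat.sub_sub, add_comm] using hgronwall

theorem norm_sub_sq_le_one_add_mul_add {E : Type*} [SeminormedAddCommGroup E] {ε : ℝ}
    (hε : 0 < ε) (a b : E) :
    ‖a - b‖ ^ 2 ≤ (1 + ε) * ‖a‖ ^ 2 + (1 + ε⁻¹) * ‖b‖ ^ 2 := by
  calc ‖a - b‖ ^ 2
      ≤ (‖a‖ + ‖b‖) ^ 2 := by gcongr; exact norm_sub_le a b
    _ = ‖a‖ ^ 2 + 2 * ‖a‖ * ‖b‖ + ‖b‖ ^ 2 := by ring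
    _ ≤ ‖a‖ ^ 2 + (ε * ‖a‖ ^ 2 + ε⁻¹ * ‖b‖ ^ 2) + ‖b‖ ^ 2 := by
        gcongr
        exact two_mul_le_add_mul_sq hε
    _ = (1 + ε) * ‖a‖ ^ 2 + (1 + ε⁻¹) * ‖b‖ ^ 2 := by ring

section Average

variable {ι E : Type*} [Fintype ι] [AddCommMonoid E] [Module ℝ E]

/-- The average of a finite family of vectors, as a linear map so that it commutes with sums and
scalars by `map_sub` and `map_smul`. It is `0` for the empty family. -/
noncomputable def average : (ι → E) →ₗ[ℝ] E :=
  (Fintype.card ι : ℝ)⁻¹ • ∑ i, LinearMap.proj i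

theorem average_apply (Y : ι → E) : average Y = (Fintype.card ι : ℝ)⁻¹ • ∑ i, Y i := by
  simp [average]

theorem average_const [Nonempty ι] (c : E) : average (fun _ : ι => c) = c := by
  rw [average_apply, Finset.sum_const, Finset.card_univ, ← Nat.cast_smul_eq_nsmul ℝ,
    inv_smul_smul₀ (Nat.cast_ne_zero.mpr Fintype.card_ne_zero)]

/-- One round of gossip averaging: the matrix `P` acting on a family of vectors. The paper's
`Y * P` has the vectors as columns, which agrees with this for symmetric `P`. -/
def gossip (P : Matrix ι ι ℝ) (Y : ι → E) : ι → E :=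
  fun i => ∑ j, P i j • Y j

theorem average_gossip {P : Matrix ι ι ℝ} (hP : ∀ j, ∑ i, P i j = 1) (Y : ι → E) :
    average (gossip P Y) = average Y := by
  simp only [average_apply, gossip]
  rw [Finset.sum_comm]
  simp only [← Finset.sum_smul, hP, one_smul]

end Average

section ConsensusDist

variable {ι E : Type*} [Fintype ι] [SeminormedAddCommGroup E] [NormedSpace ℝ E]

/-- The mean squared deviation of a family of vectors from its average: `Ξ` and `Ψ` in the paper
are its values at the iterates and at the gradients. -/
noncomputable def consensusDist (Y : ι → E) : ℝ :=
  (Fintype.card ι : ℝ)⁻¹ * ∑ i, ‖Y i - average Y‖ ^ 2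

theorem consensusDist_nonneg (Y : ι → E) : 0 ≤ consensusDist Y := by
  unfold consensusDist
  positivity

theorem consensusDist_const (c : E) : consensusDist (fun _ : ι => c) = 0 := by
  cases isEmpty_or_nonempty ι <;> simp [consensusDist, average_const]

theorem consensusDist_smul (c : ℝ) (Y : ι → E) :
    consensusDist (c • Y) = c ^ 2 * consensusDist Y := by
  simp only [consensusDist, map_smul, Pi.smul_apply, ← smul_sub, norm_smul, mul_pow,
    Real.norm_eq_abs, sq_abs, ← Finset.mul_sum]
  ring

theorem consensusDist_sub_le_one_add_mul_add {ε : ℝ} (hε : 0 < ε) (Y Z : ι → E) :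
    consensusDist (Y - Z) ≤ (1 + ε) * consensusDist Y + (1 + ε⁻¹) * consensusDist Z := by
  have hdev (i : ι) : ‖(Y - Z) i - average (Y - Z)‖ ^ 2 ≤
      (1 + ε) * ‖Y i - average Y‖ ^ 2 + (1 + ε⁻¹) * ‖Z i - average Z‖ ^ 2 := by
    rw [map_sub, Pi.sub_apply, sub_sub_sub_comm]
    exact norm_sub_sq_le_one_add_mul_add hε _ _
  calc consensusDist (Y - Z)
      ≤ (Fintype.card ι : ℝ)⁻¹ * ∑ i,
          ((1 + ε) * ‖Y i - average Y‖ ^ 2 + (1 + ε⁻¹) * ‖Z i - average Z‖ ^ 2) := by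
        unfold consensusDist
        gcongr with i
        exact hdev i
    _ = (1 + ε) * consensusDist Y + (1 + ε⁻¹) * consensusDist Z := by
        simp only [consensusDist, Finset.sum_add_distrib, ← Finset.mul_sum]
        ring

theorem one_sub_mul_consensusDist_sub_le {ρ : ℝ} (hρ : ρ ∈ Set.Ioc (0 : ℝ) 1) (Y Z : ι → E) :
    (1 - ρ) * consensusDist (Y - Z) ≤
      (1 - ρ / 2) * consensusDist Y + 2 / ρ * consensusDist Z := by
  obtain ⟨hρ_pos, hρ_le_one⟩ := hρ
  have hcoeffY : (1 - ρ) * (1 + ρ / 2) ≤ 1 - ρ / 2 := by nlinarith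
  have hcoeffZ : (1 - ρ) * (1 + (ρ / 2)⁻¹) ≤ 2 / ρ := by
    have : (1 - ρ) * (1 + (ρ / 2)⁻¹) = 2 / ρ - (1 + ρ) := by field_simp; ring
    linarith
  calc (1 - ρ) * consensusDist (Y - Z)
      ≤ (1 - ρ) * ((1 + ρ / 2) * consensusDist Y + (1 + (ρ / 2)⁻¹) * consensusDist Z) :=
        mul_le_mul_of_nonneg_left (consensusDist_sub_le_one_add_mul_add (half_pos hρ_pos) Y Z)
          (sub_nonneg.mpr hρ_le_one)
    _ = (1 - ρ) * (1 + ρ / 2) * consensusDist Y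
          + (1 - ρ) * (1 + (ρ / 2)⁻¹) * consensusDist Z := by ring
    _ ≤ (1 - ρ / 2) * consensusDist Y + 2 / ρ * consensusDist Z :=
        add_le_add (mul_le_mul_of_nonneg_right hcoeffY (consensusDist_nonneg Y))
          (mul_le_mul_of_nonneg_right hcoeffZ (consensusDist_nonneg Z))

theorem consensusDist_map_sub_smul_le {ρ : ℝ} {T : (ι → E) → ι → E}
    (hρ : ρ ∈ Set.Ioc (0 : ℝ) 1) (hT : ∀ Y, consensusDist (T Y) ≤ (1 - ρ) * consensusDist Y)
    (c : ℝ) (Y Z : ι → E) :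
    consensusDist (T (Y - c • Z)) ≤
      (1 - ρ / 2) * consensusDist Y + 2 * c ^ 2 / ρ * consensusDist Z := by
  calc consensusDist (T (Y - c • Z))
      ≤ (1 - ρ) * consensusDist (Y - c • Z) := hT _
    _ ≤ (1 - ρ / 2) * consensusDist Y + 2 / ρ * consensusDist (c • Z) :=
        one_sub_mul_consensusDist_sub_le hρ _ _
    _ = (1 - ρ / 2) * consensusDist Y + 2 * c ^ 2 / ρ * consensusDist Z := by
        rw [consensusDist_smul]
        ring

theorem consensusDist_gossip_le {P : Matrix ι ι ℝ} (hP : ∀ j, ∑ i, P i j = 1) {c : ℝ}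
    {Y : ι → E}
    (hY : ∑ i, ‖gossip P Y i - average Y‖ ^ 2 ≤ c * ∑ i, ‖Y i - average Y‖ ^ 2) :
    consensusDist (gossip P Y) ≤ c * consensusDist Y := by
  rw [consensusDist, consensusDist, average_gossip hP, mul_left_comm]
  gcongr

end ConsensusDist

theorem stmt_8_general {ι E : Type*} [Fintype ι] [SeminormedAddCommGroup E] [NormedSpace ℝ E]
    {η ρ : ℝ} {α : ℕ → ℝ} {g w : ℕ → ι → E} {mix : ℕ → (ι → E) → ι → E}
    (hρ : ρ ∈ Set.Ioc (0 : ℝ) 1)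
    (hα_one : 0 ≤ α 1) (hα_mono : MonotoneOn α (Set.Ici 1))
    (hmix : ∀ t ≥ 1, ∀ Y, consensusDist (mix t Y) ≤ (1 - ρ) * consensusDist Y)
    (hw_init : consensusDist (w 1) = 0)
    (hw_succ : ∀ t ≥ 1, w (t + 1) = mix t (w t - (η * α t) • g t)) :
    ∀ t ≥ 1, consensusDist (w t) ≤ (2 * η ^ 2 * α t ^ 2 / ρ) *
      ∑ τ ∈ Finset.Icc 1 (t - 1), (1 - ρ / 2) ^ (t - 1 - τ) * consensusDist (g τ) := by
  intro t ht
  have hρ_pos : 0 < ρ := hρ.1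
  have hq : 0 ≤ 1 - ρ / 2 := by linarith [hρ.2]
  have hround : ∀ τ ≥ 1, consensusDist (w (τ + 1)) ≤ (1 - ρ / 2) * consensusDist (w τ)
      + 2 * η ^ 2 * α τ ^ 2 / ρ * consensusDist (g τ) := by
    intro τ hτ
    rw [hw_succ τ hτ]
    refine (consensusDist_map_sub_smul_le hρ (hmix τ hτ) (η * α τ) (w τ) (g τ)).trans_eq ?_
    rw [mul_pow, mul_assoc 2]
  calc consensusDist (w t)
      ≤ ∑ τ ∈ Finset.Icc 1 (t - 1), (1 - ρ / 2) ^ (t - 1 - τ) *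
          (2 * η ^ 2 * α τ ^ 2 / ρ * consensusDist (g τ)) := by
        rw [Finset.Icc_sub_one_right_eq_Ico_of_not_isMin (not_isMin_of_lt ht)]
        simpa only [hw_init, mul_zero, zero_add] using
          le_pow_mul_add_sum_of_le_mul_add (u := fun τ => consensusDist (w τ)) hq hround ht
    _ ≤ ∑ τ ∈ Finset.Icc 1 (t - 1), (1 - ρ / 2) ^ (t - 1 - τ) *
          (2 * η ^ 2 * α t ^ 2 / ρ * consensusDist (g τ)) := by
        gcongr with τ hτ
        · exact consensusDist_nonneg (g τ)
        · exact hα_one.trans (hα_mono Set.self_mem_Ici (Finset.mem_Icc.mp hτ).1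
            (Finset.mem_Icc.mp hτ).1)
        · exact hα_mono (Finset.mem_Icc.mp hτ).1 ht
            ((Finset.mem_Icc.mp hτ).2.trans (Nat.sub_le t 1))
    _ = (2 * η ^ 2 * α t ^ 2 / ρ) *
          ∑ τ ∈ Finset.Icc 1 (t - 1), (1 - ρ / 2) ^ (t - 1 - τ) * consensusDist (g τ) := by
        rw [Finset.mul_sum]
        exact Finset.sum_congr rfl fun τ _ => by ring

/-- For DAT-SGD with a gossip matrix `P` satisfying the ρ-contraction
property and non-decreasing weights, for every `t ≥ 2` the consensus distance of the
iterates satisfies `Ξ_t ≤ (2η² α_t²/ρ)·Σ_{τ=1}^{t−1} (1 − ρ/2)^{t−1−τ} Ψ_τ`. -/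
theorem stmt_8
    (d M : ℕ) (hd : 1 ≤ d) (hM : 1 ≤ M)
    (η : ℝ) (hη : 0 < η)
    (α : ℕ → ℝ) (hα_nonneg : ∀ t ≥ 1, 0 ≤ α t) (hα1 : 0 < α 1)
    (A : ℕ → ℝ) (hA : ∀ t, A t = ∑ τ ∈ Finset.Icc 1 t, α τ)
    (P : Matrix (Fin M) (Fin M) ℝ)
    (hP_symm : P.IsSymm)
    (hP_nonneg : ∀ i j, 0 ≤ P i j) (hP_le_one : ∀ i j, P i j ≤ 1)
    (hP_rows : ∀ i, ∑ j, P i j = 1) (hP_cols : ∀ j, ∑ i, P i j = 1)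
    (w₁ : EuclideanSpace ℝ (Fin d))
    (g w x : ℕ → Fin M → EuclideanSpace ℝ (Fin d))
    (hw1 : ∀ i, w 1 i = w₁) (hx1 : ∀ i, x 1 i = w₁)
    (hwrec : ∀ t ≥ 1, ∀ i,
      w (t + 1) i = ∑ j, P i j • (w t j - (η * α t) • g t j))
    (hxrec : ∀ t ≥ 1, ∀ i,
      x (t + 1) i = ∑ j, P i j •
        ((A (t - 1) / A t) • x t j + (α t / A t) • (w t j - (η * α t) • g t j)))
    (hα_mono : ∀ t ≥ 1, α t ≤ α (t + 1))
    (ρ : ℝ) (hρ : ρ ∈ Set.Ioc (0 : ℝ) 1)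
    (hP_contract : ∀ Y : Fin M → EuclideanSpace ℝ (Fin d),
      ∑ i, ‖(∑ j, P i j • Y j) - (M : ℝ)⁻¹ • ∑ j, Y j‖ ^ 2
        ≤ (1 - ρ) * ∑ i, ‖Y i - (M : ℝ)⁻¹ • ∑ j, Y j‖ ^ 2)
    (Γ Ξ Ψ : ℕ → ℝ)
    (hΓ : ∀ t, Γ t = (M : ℝ)⁻¹ * ∑ i, ‖x t i - (M : ℝ)⁻¹ • ∑ j, x t j‖ ^ 2)
    (hΞ : ∀ t, Ξ t = (M : ℝ)⁻¹ * ∑ i, ‖w t i - (M : ℝ)⁻¹ • ∑ j, w t j‖ ^ 2)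
    (hΨ : ∀ t, Ψ t = (M : ℝ)⁻¹ * ∑ i, ‖g t i - (M : ℝ)⁻¹ • ∑ j, g t j‖ ^ 2)
    :
    ∀ t ≥ 2,
      Ξ t ≤ (2 * η ^ 2 * (α t) ^ 2 / ρ)
        * ∑ τ ∈ Finset.Icc 1 (t - 1), (1 - ρ / 2) ^ (t - 1 - τ) * Ψ τ := by
  have hcontract (Y : Fin M → EuclideanSpace ℝ (Fin d)) :
      consensusDist (gossip P Y) ≤ (1 - ρ) * consensusDist Y :=
    consensusDist_gossip_le hP_cols <| by
      simpa only [gossip, average_apply, Fintype.card_fin] using hP_contract Y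
  have hinit : consensusDist (w 1) = 0 := by
    rw [show w 1 = fun _ => w₁ from funext hw1, consensusDist_const]
  intro t ht
  simpa only [hΞ, hΨ, consensusDist, average_apply, Fintype.card_fin] using
    stmt_8_general hρ hα1.le (monotoneOn_nat_Ici_of_le_succ hα_mono)
      (fun _ _ => hcontract) hinit (fun τ hτ => funext (hwrec τ hτ)) t (one_le_two.trans ht)
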